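/- With i the standard imaginary unit of ℍ, the quaternionic Mahler measures of the ∗-squares and ∗-cubes of q − i are: m_ℍ(q ↦ q² − 2qi − 1) = 5/6 and m_ℍ(q ↦ q³ − 3q²i − 3q + i) = 31/4 − 2π. -/

import Mathlib

/-!
The ∗-powers `fₙ` of `x - i` satisfy `fₙ₊₁(q) = q fₙ(q) - fₙ(q) i`. For a unit quaternion `q`, put
`a = Re q`, let `b` be its `i`-coordinate and `s = √(1 - a²)`; then the recursion gives
`2s |fₙ(q)|² = 2ⁿ ((s - b)(1 + s)ⁿ + (s + b)(1 - s)ⁿ)`, which is affine in `b`. As in Archimedes'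
hat-box theorem, Haar measure on the 3-sphere projects to the uniform probability measure on the
unit disk of all `(a, b)`. Integrating the logarithm of an affine function over `-s < b < s` and
substituting `a = sin x` leaves an integral over `[0, π]` of a rational function of `cos x` against
`log (1 + cos x)`. Powers of `cos x` contribute through the Fourier coefficients of
`log (1 + cos x)`; for the cube there is also the term `cos x / (cos² x + 3)`, whose Fourier series
sums to an arctangent at `2 - √3 = tan (π / 12)`, hence the term `2π`.
-/

open MeasureTheory Quaternion

noncomputable instance : MeasurableSpace (Quaternion ℝ) := borel _
instance : BorelSpace (Quaternion ℝ) := ⟨rfl⟩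
instance : Nonempty (Metric.sphere (0 : Quaternion ℝ) 1) := ⟨⟨1, by simp⟩⟩

/-- The probability Haar measure `μ` on the group `T¹(ℍ)` of unit quaternions
(the Haar measure normalized so that the whole group has measure `1`). -/
noncomputable def muH : Measure (Metric.sphere (0 : Quaternion ℝ) 1) :=
  Measure.haarMeasure ⊤

/-- The quaternionic Mahler measure `m_ℍ(f) = ∫_{T¹(ℍ)} log |f(q)| dμ(q)`. -/
noncomputable def mahlerH (f : Quaternion ℝ → Quaternion ℝ) : ℝ :=
  ∫ q : Metric.sphere (0 : Quaternion ℝ) 1, Real.log ‖f q‖ ∂muH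
/-- The standard imaginary unit `i` of the quaternions. -/
noncomputable def qI : Quaternion ℝ := ⟨0, 1, 0, 0⟩
/-- The standard imaginary unit `j` of the quaternions. -/
noncomputable def qJ : Quaternion ℝ := ⟨0, 0, 1, 0⟩
/-- The standard imaginary unit `k` of the quaternions. -/
noncomputable def qK : Quaternion ℝ := ⟨0, 0, 0, 1⟩

section LogOneAddCos
open Real intervalIntegral Polynomial.Chebyshev

lemma intervalIntegrable_log_one_add_cos (a b : ℝ) :
    IntervalIntegrable (fun x => log (1 + cos x)) volume a b :=
  MeromorphicOn.intervalIntegrable_log (f := fun x => 1 + cos x) fun _ _ =>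
    (analyticAt_const.add analyticAt_cos).meromorphicAt

lemma intervalIntegrable_mul_log_one_add_cos {f : ℝ → ℝ} (hf : Continuous f) (a b : ℝ) :
    IntervalIntegrable (fun x => f x * log (1 + cos x)) volume a b :=
  (intervalIntegrable_log_one_add_cos a b).continuousOn_mul hf.continuousOn

lemma one_add_cos_pos {x : ℝ} (hx : x ∈ Set.Ioo 0 π) : 0 < 1 + cos x := by
  linarith [cos_pi, cos_lt_cos_of_nonneg_of_le_pi hx.1.le le_rfl hx.2]

lemma one_add_cos_eq_two_mul_cos_half_sq (x : ℝ) : 1 + cos x = 2 * cos (x / 2) ^ 2 := by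
  rw [cos_sq, mul_div_cancel₀ x two_ne_zero]
  ring

lemma integral_log_cos_zero_pi_div_two : ∫ x in 0..π / 2, log (cos x) = -log 2 * π / 2 := by
  rw [← integral_log_sin_zero_pi_div_two]
  simpa [cos_pi_div_two_sub] using (integral_comp_sub_left (fun x => log (cos x)) (π / 2)
    (a := 0) (b := π / 2)).symm

lemma integral_log_one_add_cos : ∫ x in 0..π, log (1 + cos x) = -(π * log 2) := by
  have hint : IntervalIntegrable (fun x => log (cos x)) volume 0 (π / 2) :=
    MeromorphicOn.intervalIntegrable_log fun _ _ => analyticAt_cos.meromorphicAt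
  calc
    ∫ x in 0..π, log (1 + cos x) = ∫ x in 0..π, (log 2 + 2 * log (cos (x / 2))) := by
      refine integral_congr_Ioo_of_le pi_pos.le fun x hx => ?_
      have hcos : 0 < cos (x / 2) :=
        cos_pos_of_mem_Ioo ⟨by linarith [hx.1, pi_pos], by linarith [hx.2]⟩
      rw [one_add_cos_eq_two_mul_cos_half_sq, log_mul two_ne_zero (by positivity), log_pow]
      norm_cast
    _ = 2 * ∫ y in 0..π / 2, (log 2 + 2 * log (cos y)) := by
      rw [integral_comp_div (fun y => log 2 + 2 * log (cos y)) two_ne_zero, zero_div, smul_eq_mul]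
    _ = -(π * log 2) := by
      rw [integral_add intervalIntegrable_const (hint.const_mul 2),
        intervalIntegral.integral_const_mul, integral_log_cos_zero_pi_div_two,
        intervalIntegral.integral_const, smul_eq_mul]
      ring

lemma continuous_sin_mul_log_one_add_cos : Continuous fun x => sin x * log (1 + cos x) := by
  suffices h : (fun x => sin x * log (1 + cos x)) = fun x =>
      2 * sin (x / 2) * (cos (x / 2) * log 2 + 2 * (cos (x / 2) * log (cos (x / 2)))) by
    have := continuous_mul_log.comp (show Continuous fun x : ℝ => cos (x / 2) by fun_prop)
    simp only [Function.comp_def] at this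
    rw [h]
    fun_prop
  funext x
  have hsin : sin x = 2 * sin (x / 2) * cos (x / 2) := by
    rw [← sin_two_mul, mul_div_cancel₀ x two_ne_zero]
  rw [hsin, one_add_cos_eq_two_mul_cos_half_sq]
  rcases eq_or_ne (cos (x / 2)) 0 with hcos | hcos
  · simp [hcos]
  · rw [log_mul two_ne_zero (pow_ne_zero _ hcos), log_pow]
    push_cast
    ring

lemma continuous_eval_U_cos (n : ℕ) : Continuous fun x => (U ℝ n).eval (cos x) :=
  (U ℝ n).continuous.comp continuous_cos

lemma integral_cos_succ_mul (n : ℕ) : ∫ x in 0..π, cos ((n + 1) * x) = 0 := by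
  rw [integral_comp_mul_left cos (by positivity), integral_cos, ← Nat.cast_succ, sin_nat_mul_pi]
  simp

lemma eval_U_succ_add_eval_U_mul_one_sub_cos (n : ℕ) (x : ℝ) :
    ((U ℝ (n + 1 : ℕ)).eval (cos x) + (U ℝ n).eval (cos x)) * (1 - cos x) =
      cos ((n + 1) * x) - cos ((n + 1 + 1) * x) := by
  have hU : (U ℝ (n + 1 : ℕ)).eval (cos x) =
      cos x * (U ℝ n).eval (cos x) + cos ((n + 1) * x) := by
    have := T_real_cos x (n + 1)
    push_cast at this ⊢
    rw [U_eq_X_mul_U_add_T]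
    simp [this]
  have hT : cos ((n + 1 + 1) * x) =
      cos x * cos ((n + 1) * x) - (1 - cos x ^ 2) * (U ℝ n).eval (cos x) := by
    have h1 := T_real_cos x (n + 1)
    have h2 := T_real_cos x (n + 2)
    rw [T_eq_X_mul_T_sub_pol_U] at h2
    simp only [Polynomial.eval_sub, Polynomial.eval_mul, Polynomial.eval_X, Polynomial.eval_pow,
      Polynomial.eval_one, h1] at h2
    push_cast at h2
    rw [h2]
    congr 1
    ring
  rw [hU, hT]
  ring

lemma integral_eval_U_cos_mul_one_sub_cos (n : ℕ) :
    ∫ x in 0..π, (U ℝ n).eval (cos x) * (1 - cos x) = (-1) ^ n * π := by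
  induction n with
  | zero => simp
  | succ n ih =>
    have hint (m : ℕ) :
        IntervalIntegrable (fun x => (U ℝ m).eval (cos x) * (1 - cos x)) volume 0 π :=
      ((continuous_eval_U_cos m).mul (by fun_prop)).intervalIntegrable _ _
    have hsum : ∫ x in 0..π, ((U ℝ (n + 1 : ℕ)).eval (cos x) * (1 - cos x) +
        (U ℝ n).eval (cos x) * (1 - cos x)) = 0 := by
      have hcos := integral_cos_succ_mul (n + 1)
      push_cast at hcos
      simp_rw [← add_mul, eval_U_succ_add_eval_U_mul_one_sub_cos]
      rw [integral_sub (Continuous.intervalIntegrable (by fun_prop) _ _)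
        (Continuous.intervalIntegrable (by fun_prop) _ _), integral_cos_succ_mul, hcos, sub_zero]
    rw [integral_add (hint _) (hint _), ih] at hsum
    rw [pow_succ]
    linarith

lemma integral_cos_succ_mul_log_one_add_cos (n : ℕ) :
    ∫ x in 0..π, cos ((n + 1) * x) * log (1 + cos x) = (-1) ^ n * π / (n + 1) := by
  have hsin (x : ℝ) : sin ((n + 1) * x) = (U ℝ n).eval (cos x) * sin x := by
    simp
  have hcont : Continuous fun x => sin ((n + 1) * x) * log (1 + cos x) := by
    simp_rw [hsin, mul_assoc]
    exact (continuous_eval_U_cos n).mul continuous_sin_mul_log_one_add_cos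
  have hderiv : ∀ x ∈ Set.Ioo 0 π, HasDerivAt (fun x => sin ((n + 1) * x) * log (1 + cos x))
      ((n + 1) * (cos ((n + 1) * x) * log (1 + cos x)) - (U ℝ n).eval (cos x) * (1 - cos x))
      x := by
    intro x hx
    have hpos := one_add_cos_pos hx
    refine (((hasDerivAt_id' x).const_mul (n + 1 : ℝ)).sin.mul
      (((hasDerivAt_cos x).const_add 1).log hpos.ne')).congr_deriv ?_
    rw [hsin]
    field_simp
    linear_combination -(U ℝ n).eval (cos x) * sin_sq_add_cos_sq x
  have hint₁ := (intervalIntegrable_mul_log_one_add_cos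
    (show Continuous fun x => cos ((n + 1) * x) by fun_prop) 0 π).const_mul (n + 1 : ℝ)
  have hint₂ : IntervalIntegrable (fun x => (U ℝ n).eval (cos x) * (1 - cos x)) volume 0 π :=
    ((continuous_eval_U_cos n).mul (by fun_prop)).intervalIntegrable _ _
  have hparts := integral_eq_sub_of_hasDerivAt_of_le pi_pos.le hcont.continuousOn hderiv
    (hint₁.sub hint₂)
  rw [integral_sub hint₁ hint₂, intervalIntegral.integral_const_mul,
    integral_eval_U_cos_mul_one_sub_cos, hsin, hsin] at hparts
  simp only [sin_pi, sin_zero, mul_zero, zero_mul, sub_zero] at hparts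
  rw [eq_div_iff (by positivity)]
  linarith

lemma integral_cos_mul_log_one_add_cos : ∫ x in 0..π, cos x * log (1 + cos x) = π := by
  simpa using integral_cos_succ_mul_log_one_add_cos 0

lemma integral_cos_sq_mul_log_one_add_cos :
    ∫ x in 0..π, cos x ^ 2 * log (1 + cos x) = -(π / 2 * log 2) - π / 4 := by
  have hdouble : ∫ x in 0..π, cos (2 * x) * log (1 + cos x) = -(π / 2) := by
    convert integral_cos_succ_mul_log_one_add_cos 1 using 1
    · norm_num
    · norm_num
      ring
  calc
    ∫ x in 0..π, cos x ^ 2 * log (1 + cos x) =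
        ∫ x in 0..π, (1 / 2 * log (1 + cos x) + 1 / 2 * (cos (2 * x) * log (1 + cos x))) := by
      congr 1 with x
      rw [cos_sq]
      ring
    _ = -(π / 2 * log 2) - π / 4 := by
      rw [integral_add ((intervalIntegrable_log_one_add_cos 0 π).const_mul _)
        ((intervalIntegrable_mul_log_one_add_cos (by fun_prop) 0 π).const_mul _),
        intervalIntegral.integral_const_mul, intervalIntegral.integral_const_mul,
        integral_log_one_add_cos, hdouble]
      ring

lemma integral_cos_cube_mul_log_one_add_cos :
    ∫ x in 0..π, cos x ^ 3 * log (1 + cos x) = 5 / 6 * π := by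
  have htriple : ∫ x in 0..π, cos (3 * x) * log (1 + cos x) = π / 3 := by
    convert integral_cos_succ_mul_log_one_add_cos 2 using 1 <;> norm_num
  calc
    ∫ x in 0..π, cos x ^ 3 * log (1 + cos x) =
        ∫ x in 0..π, (3 / 4 * (cos x * log (1 + cos x)) +
          1 / 4 * (cos (3 * x) * log (1 + cos x))) := by
      congr 1 with x
      rw [cos_three_mul]
      ring
    _ = 5 / 6 * π := by
      rw [integral_add ((intervalIntegrable_mul_log_one_add_cos continuous_cos 0 π).const_mul _)
        ((intervalIntegrable_mul_log_one_add_cos (by fun_prop) 0 π).const_mul _),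
        intervalIntegral.integral_const_mul, intervalIntegral.integral_const_mul,
        integral_cos_mul_log_one_add_cos, htriple]
      ring

variable {r : ℝ}

lemma hasSum_neg_one_pow_mul_cos_odd_mul (hr : |r| < 1) (x : ℝ) :
    HasSum (fun m : ℕ => (-1) ^ m * r ^ (2 * m + 1) * cos ((2 * m + 1) * x))
      (r * (1 + r ^ 2) * cos x / ((1 - r ^ 2) ^ 2 + 4 * r ^ 2 * cos x ^ 2)) := by
  set z : ℂ := r * Complex.exp (x * Complex.I) with hz
  have hnorm : ‖-z ^ 2‖ < 1 := by
    simpa [hz, Complex.norm_exp_ofReal_mul_I] using (sq_lt_one_iff_abs_lt_one r).2 hr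
  convert Complex.hasSum_re ((hasSum_geometric_of_norm_lt_one hnorm).mul_left z) using 1
  · funext m
    have hpow : z * (-z ^ 2) ^ m = ((-1) ^ m * r ^ (2 * m + 1) : ℝ) *
        Complex.exp (((2 * m + 1) * x : ℝ) * Complex.I) := by
      calc z * (-z ^ 2) ^ m = (-1) ^ m * z ^ (2 * m + 1) := by rw [neg_pow]; ring
        _ = _ := by
          rw [hz, mul_pow, ← Complex.exp_nat_mul]
          push_cast
          ring_nf
    rw [hpow, Complex.re_ofReal_mul, Complex.exp_ofReal_mul_I_re]
  · have hsq := sin_sq_add_cos_sq x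
    have hre : z.re = r * cos x := by simp [hz, Complex.exp_ofReal_mul_I_re]
    have him : z.im = r * sin x := by simp [hz, Complex.exp_ofReal_mul_I_im]
    have hnormSq : Complex.normSq (1 + z ^ 2) =
        (1 - r ^ 2) ^ 2 + 4 * r ^ 2 * cos x ^ 2 := by
      simp only [Complex.normSq_apply, sq, Complex.add_re, Complex.add_im, Complex.mul_re,
        Complex.mul_im, Complex.one_re, Complex.one_im, hre, him]
      grind
    rw [sub_neg_eq_add, ← div_eq_mul_inv, Complex.div_re, hnormSq, ← add_div]
    congr 1
    simp only [sq, Complex.add_re, Complex.add_im, Complex.mul_re,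
        Complex.mul_im, Complex.one_re, Complex.one_im, hre, him]
    grind

lemma integral_cos_div_mul_log_one_add_cos_eq_arctan (hr : |r| < 1) :
    ∫ x in 0..π, r * (1 + r ^ 2) * cos x / ((1 - r ^ 2) ^ 2 + 4 * r ^ 2 * cos x ^ 2) *
      log (1 + cos x) = π * arctan r := by
  have hterm (m : ℕ) : ∫ x in 0..π, (-1) ^ m * r ^ (2 * m + 1) * cos ((2 * m + 1) * x) *
      log (1 + cos x) = π * ((-1) ^ m * r ^ (2 * m + 1) / (2 * m + 1 : ℕ)) := by
    have hcoeff := integral_cos_succ_mul_log_one_add_cos (2 * m)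
    simp_rw [mul_assoc ((-1) ^ m * r ^ (2 * m + 1))]
    rw [intervalIntegral.integral_const_mul]
    push_cast at hcoeff ⊢
    rw [hcoeff, pow_mul (-1 : ℝ), neg_one_sq, one_pow]
    ring
  have hgeom : Summable fun m : ℕ => |r| ^ (2 * m + 1) := by
    have hr2 : |r| ^ 2 < 1 := pow_lt_one₀ (abs_nonneg r) hr two_ne_zero
    simpa only [pow_succ, pow_mul] using
      (summable_geometric_of_lt_one (by positivity) hr2).mul_right |r|
  have hsum := hasSum_integral_of_dominated_convergence (μ := volume) (a := 0) (b := π)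
    (F := fun (m : ℕ) x => (-1) ^ m * r ^ (2 * m + 1) * cos ((2 * m + 1) * x) * log (1 + cos x))
    (fun m x => |r| ^ (2 * m + 1) * |log (1 + cos x)|)
    (fun m => (intervalIntegrable_mul_log_one_add_cos (by fun_prop) 0 π).def'.aestronglyMeasurable)
    (fun m => .of_forall fun x _ => by
      rw [norm_mul, norm_mul, norm_mul, norm_pow, norm_pow, norm_neg, norm_one, one_pow, one_mul,
        norm_eq_abs, norm_eq_abs, norm_eq_abs]
      gcongr
      exact mul_le_of_le_one_right (by positivity) (abs_cos_le_one _))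
    (.of_forall fun x _ => hgeom.mul_right _)
    (by
      simp_rw [tsum_mul_right]
      exact (intervalIntegrable_log_one_add_cos 0 π).abs.const_mul _)
    (.of_forall fun x _ => (hasSum_neg_one_pow_mul_cos_odd_mul hr x).mul_right _)
  simp_rw [hterm] at hsum
  exact hsum.unique ((hasSum_arctan (by simpa using hr)).mul_left π)

lemma arctan_two_sub_sqrt_three : arctan (2 - √3) = π / 12 := by
  have hsq : √3 ^ 2 = 3 := sq_sqrt (by norm_num)
  have hlt : 2 - √3 < 1 := by nlinarith [sqrt_nonneg 3]
  have hgt : -1 < 2 - √3 := by nlinarith [sqrt_nonneg 3]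
  have hdouble := two_mul_arctan hgt hlt
  have hval : 2 * (2 - √3) / (1 - (2 - √3) ^ 2) = (√3)⁻¹ := by
    have : 1 - (2 - √3) ^ 2 ≠ 0 := by nlinarith
    rw [div_eq_iff this]
    field_simp
    nlinarith
  rw [hval, arctan_inv_sqrt_three] at hdouble
  linarith

lemma integral_cos_div_cos_sq_add_three_mul_log_one_add_cos :
    ∫ x in 0..π, cos x / (cos x ^ 2 + 3) * log (1 + cos x) = π ^ 2 / 12 := by
  set r : ℝ := 2 - √3
  have hsq : √3 ^ 2 = 3 := sq_sqrt (by norm_num)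
  have hr0 : 0 < r := by nlinarith [sqrt_nonneg 3]
  have hr1 : |r| < 1 := by rw [abs_of_pos hr0]; nlinarith [sqrt_nonneg 3]
  have hquad : r ^ 2 = 4 * r - 1 := by linear_combination hsq
  have hkernel (c : ℝ) :
      r * (1 + r ^ 2) * c / ((1 - r ^ 2) ^ 2 + 4 * r ^ 2 * c ^ 2) = c / (c ^ 2 + 3) := by
    have hden : (1 - r ^ 2) ^ 2 + 4 * r ^ 2 * c ^ 2 = 4 * r ^ 2 * (c ^ 2 + 3) := by
      linear_combination (r ^ 2 + 4 * r + 1) * hquad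
    rw [hden, show r * (1 + r ^ 2) * c = 4 * r ^ 2 * c by linear_combination r * c * hquad]
    exact mul_div_mul_left _ _ (by positivity)
  simp_rw [← hkernel]
  rw [integral_cos_div_mul_log_one_add_cos_eq_arctan hr1, arctan_two_sub_sqrt_three]
  ring

end LogOneAddCos
section SphereProjection
open Real
open scoped Pointwise ENNReal

lemma lintegral_Ioi_zero_comp_sq_mul (f : ℝ → ℝ≥0∞) :
    ∫⁻ r in Set.Ioi 0, ENNReal.ofReal (2 * r) * f (r ^ 2) = ∫⁻ t in Set.Ioi 0, f t := by
  have himage : (fun r : ℝ => r ^ 2) '' Set.Ioi 0 = Set.Ioi 0 := by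
    ext t
    refine ⟨?_, fun ht => ⟨√t, sqrt_pos.2 ht, sq_sqrt (le_of_lt ht)⟩⟩
    rintro ⟨r, hr, rfl⟩
    exact pow_pos (Set.mem_Ioi.1 hr) 2
  have hsubst := lintegral_image_eq_lintegral_abs_deriv_mul (s := Set.Ioi 0)
    (f := fun r : ℝ => r ^ 2) (f' := fun r => 2 * r) measurableSet_Ioi
    (fun r _ => by simpa using (hasDerivAt_pow 2 r).hasDerivWithinAt)
    (fun r hr s hs h => (sq_eq_sq₀ (le_of_lt hr) (le_of_lt hs)).1 h) f
  rw [himage] at hsubst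
  rw [hsubst]
  refine setLIntegral_congr_fun measurableSet_Ioi fun r (hr : 0 < r) => ?_
  rw [abs_of_pos (by positivity)]

lemma lintegral_complex_comp_norm_sq {f : ℝ → ℝ≥0∞} (hf : Measurable f) :
    ∫⁻ w : ℂ, f (‖w‖ ^ 2) = ENNReal.ofReal π * ∫⁻ t in Set.Ioi 0, f t := by
  rw [← Complex.lintegral_comp_polarCoord_symm, ← lintegral_Ioi_zero_comp_sq_mul,
    ← lintegral_const_mul _ (by fun_prop), polarCoord_target, Measure.volume_eq_prod,
    ← Measure.prod_restrict]
  simp_rw [Complex.norm_polarCoord_symm, sq_abs, smul_eq_mul]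
  rw [lintegral_prod _ (by fun_prop)]
  refine setLIntegral_congr_fun measurableSet_Ioi fun r (hr : 0 < r) => ?_
  simp only [lintegral_const, Measure.restrict_apply_univ, Real.volume_Ioo]
  rw [mul_right_comm, ← mul_assoc, ← ENNReal.ofReal_mul hr.le, ← ENNReal.ofReal_mul pi_pos.le]
  congr 2
  ring

lemma lintegral_Ioo_ofReal_sqrt_pow (d : ℕ) :
    ∫⁻ r in Set.Ioo 0 1, ENNReal.ofReal (√r ^ d) = ENNReal.ofReal (2 / (d + 2)) := by
  have hint : ∫ r in (0 : ℝ)..1, √r ^ d = 2 / (d + 2) := by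
    have hpow (r : ℝ) (hr : r ∈ Set.uIcc (0 : ℝ) 1) : √r ^ d = r ^ (d / 2 : ℝ) := by
      rw [Set.uIcc_of_le zero_le_one] at hr
      rw [sqrt_eq_rpow, ← rpow_natCast, ← rpow_mul hr.1]
      ring_nf
    have hd : (-1 : ℝ) < d / 2 := neg_one_lt_zero.trans_le (by positivity)
    rw [intervalIntegral.integral_congr hpow, integral_rpow (Or.inl hd),
      zero_rpow (by positivity), one_rpow]
    field_simp
    ring
  rw [← hint, intervalIntegral.integral_of_le zero_le_one, integral_Ioc_eq_integral_Ioo,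
    ofReal_integral_eq_lintegral_ofReal]
  · exact (Continuous.integrableOn_Icc (by fun_prop)).mono_set Set.Ioo_subset_Icc_self
  · exact .of_forall fun r => by positivity

lemma Ioo_smul_image_coe_sphere {V : Type*} [NormedAddCommGroup V] [NormedSpace ℝ V]
    (S : Set (Metric.sphere (0 : V) 1)) :
    Set.Ioo (0 : ℝ) 1 • ((↑) '' S : Set V) =
      {x | ‖x‖ ∈ Set.Ioo 0 1 ∧ ‖x‖⁻¹ • x ∈ ((↑) '' S : Set V)} := by
  ext x
  constructor
  · rintro ⟨r, hr, _, ⟨y, hy, rfl⟩, rfl⟩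
    have hnorm : ‖r • (y : V)‖ = r := by simp [norm_smul, abs_of_pos hr.1]
    simp only [Set.mem_ofPred_eq, hnorm, inv_smul_smul₀ hr.1.ne']
    exact ⟨hr, y, hy, rfl⟩
  · rintro ⟨hx, hS⟩
    exact ⟨‖x‖, hx, _, hS, smul_inv_smul₀ hx.1.ne' x⟩

variable {E X : Type*} [NormedAddCommGroup E] [InnerProductSpace ℝ E]
  [NormedAddCommGroup X] [InnerProductSpace ℝ X]

/-- The cone in `E × ℂ` over the points of the Euclidean unit sphere whose first component lies
in `A`, truncated to the punctured unit ball. The Euclidean norm is written out because `E × ℂ`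
carries the supremum norm. -/
def sphereCone (A : Set E) : Set (E × ℂ) :=
  {z | ‖z.1‖ ^ 2 + ‖z.2‖ ^ 2 ∈ Set.Ioo 0 1 ∧ (√(‖z.1‖ ^ 2 + ‖z.2‖ ^ 2))⁻¹ • z.1 ∈ A}

lemma Ioo_smul_image_preimage_fst_eq_preimage_sphereCone (e : X ≃ₗᵢ[ℝ] WithLp 2 (E × ℂ))
    (A : Set E) :
    Set.Ioo (0 : ℝ) 1 • ((↑) '' ((fun x : Metric.sphere (0 : X) 1 => (e x).fst) ⁻¹' A) : Set X) =
      (fun x => WithLp.ofLp (e x)) ⁻¹' sphereCone A := by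
  rw [Ioo_smul_image_coe_sphere]
  ext x
  have hnorm : ‖(e x).fst‖ ^ 2 + ‖(e x).snd‖ ^ 2 = ‖x‖ ^ 2 := by
    rw [← WithLp.prod_norm_sq_eq_of_L2, e.norm_map]
  change _ ↔ ‖(e x).fst‖ ^ 2 + ‖(e x).snd‖ ^ 2 ∈ Set.Ioo 0 1 ∧
    (√(‖(e x).fst‖ ^ 2 + ‖(e x).snd‖ ^ 2))⁻¹ • (e x).fst ∈ A
  rw [hnorm, sqrt_sq (norm_nonneg x), Set.mem_ofPred_eq, Set.mem_Ioo, Set.mem_Ioo,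
    sq_lt_one_iff₀ (norm_nonneg x), sq_pos_iff, norm_pos_iff, norm_ne_zero_iff]
  refine and_congr_right fun hx => ?_
  have hsphere : ‖‖x‖⁻¹ • x‖ = 1 := by simp [norm_smul, hx.1]
  simp [hsphere]

variable [FiniteDimensional ℝ E] [MeasurableSpace E] [BorelSpace E]

lemma lintegral_prod_complex_comp_norm_sq_add {F : E → ℝ → ℝ≥0∞}
    (hF : Measurable (Function.uncurry F)) :
    ∫⁻ z : E × ℂ, F z.1 (‖z.1‖ ^ 2 + ‖z.2‖ ^ 2) =
      ENNReal.ofReal π * ∫⁻ r : ℝ, ∫⁻ v in Metric.ball (0 : E) √r, F v r := by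
  set D : Set (E × ℝ) := {p | ‖p.1‖ ^ 2 < p.2}
  have hD : MeasurableSet D := measurableSet_lt (by fun_prop) measurable_snd
  have hFD := hF.indicator hD
  have hshift (v : E) : ∫⁻ t in Set.Ioi 0, F v (‖v‖ ^ 2 + t) =
      ∫⁻ r, D.indicator (Function.uncurry F) (v, r) := by
    rw [← lintegral_indicator measurableSet_Ioi,
      ← lintegral_add_left_eq_self (fun r => D.indicator (Function.uncurry F) (v, r)) (‖v‖ ^ 2)]
    simp [Set.indicator_apply, D, Function.uncurry]
  have hslice (r : ℝ) : ∫⁻ v, D.indicator (Function.uncurry F) (v, r) =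
      ∫⁻ v in Metric.ball (0 : E) √r, F v r := by
    rw [← lintegral_indicator Metric.isOpen_ball.measurableSet]
    classical
    simp [Set.indicator_apply, D, Function.uncurry, lt_sqrt]
  calc
    _ = ∫⁻ v : E, ENNReal.ofReal π * ∫⁻ t in Set.Ioi 0, F v (‖v‖ ^ 2 + t) := by
      rw [Measure.volume_eq_prod, lintegral_prod _ (by fun_prop)]
      exact lintegral_congr fun v => lintegral_complex_comp_norm_sq
        (f := fun t => F v (‖v‖ ^ 2 + t)) (by fun_prop)
    _ = _ := by
      simp_rw [hshift, ← hslice]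
      rw [lintegral_const_mul _ hFD.lintegral_prod_right', lintegral_lintegral_swap
        (f := fun v r => D.indicator (Function.uncurry F) (v, r)) hFD.aemeasurable]

lemma measurableSet_sphereCone {A : Set E} (hA : MeasurableSet A) :
    MeasurableSet (sphereCone A) := by
  refine .inter (measurableSet_preimage ?_ measurableSet_Ioo) (measurableSet_preimage ?_ hA) <;>
    fun_prop

lemma volume_sphereCone {A : Set E} (hA : MeasurableSet A) :
    volume (sphereCone A) = ENNReal.ofReal (2 * π / (Module.finrank ℝ E + 2)) *
      volume (A ∩ Metric.ball 0 1) := by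
  set B : Set (E × ℝ) := {p | p.2 ∈ Set.Ioo 0 1 ∧ (√p.2)⁻¹ • p.1 ∈ A}
  have hB : MeasurableSet B := by
    refine .inter (measurableSet_preimage measurable_snd measurableSet_Ioo)
      (measurableSet_preimage ?_ hA)
    fun_prop
  have hslice (r : ℝ) : ∫⁻ v in Metric.ball (0 : E) √r, B.indicator 1 (v, r) =
      (Set.Ioo 0 1).indicator (fun r => ENNReal.ofReal (√r ^ Module.finrank ℝ E) *
        volume (A ∩ Metric.ball 0 1)) r := by
    by_cases hr : r ∈ Set.Ioo (0 : ℝ) 1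
    · have hs : 0 < √r := sqrt_pos.2 hr.1
      have hset : {v | (v, r) ∈ B} ∩ Metric.ball 0 √r = √r • (A ∩ Metric.ball 0 1) := by
        ext v
        simp [B, hr.1, hr.2, Set.mem_smul_set_iff_inv_smul_mem₀ hs.ne', norm_smul,
          abs_of_pos hs, inv_mul_lt_one₀ hs]
      have hind (v : E) : B.indicator (1 : E × ℝ → ℝ≥0∞) (v, r) =
        {v | (v, r) ∈ B}.indicator 1 v := rfl
      have hBr : MeasurableSet {v | (v, r) ∈ B} := hB.preimage measurable_prodMk_right
      simp_rw [hind]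
      rw [lintegral_indicator_one hBr, Measure.restrict_apply hBr, hset, Measure.addHaar_smul,
        Set.indicator_of_mem hr, abs_of_pos (pow_pos hs _)]
    · have hind (v : E) : B.indicator (1 : E × ℝ → ℝ≥0∞) (v, r) = 0 :=
        Set.indicator_of_notMem (fun h => hr h.1) _
      simp [hind, hr]
  have hcone (z : E × ℂ) : (sphereCone A).indicator (1 : E × ℂ → ℝ≥0∞) z =
      B.indicator 1 (z.1, ‖z.1‖ ^ 2 + ‖z.2‖ ^ 2) := rfl
  rw [← lintegral_indicator_one (measurableSet_sphereCone hA)]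
  simp_rw [hcone]
  rw [lintegral_prod_complex_comp_norm_sq_add (F := fun v r => B.indicator 1 (v, r))
    (measurable_one.indicator hB)]
  simp_rw [hslice]
  rw [lintegral_indicator measurableSet_Ioo, lintegral_mul_const _ (by fun_prop),
    lintegral_Ioo_ofReal_sqrt_pow, ← mul_assoc, ← ENNReal.ofReal_mul pi_pos.le]
  congr 2
  ring

variable [FiniteDimensional ℝ X] [MeasurableSpace X] [BorelSpace X]

theorem map_fst_toSphere (e : X ≃ₗᵢ[ℝ] WithLp 2 (E × ℂ)) :
    (volume : Measure X).toSphere.map (fun x : Metric.sphere (0 : X) 1 => (e x).fst) =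
      ENNReal.ofReal (2 * π) • volume.restrict (Metric.ball (0 : E) 1) := by
  have hcont : Continuous fun x : Metric.sphere (0 : X) 1 => (e x).fst :=
    continuous_fst.comp ((WithLp.prod_continuous_ofLp 2 E ℂ).comp
      (e.continuous.comp continuous_subtype_val))
  have hrank : Module.finrank ℝ X = Module.finrank ℝ E + 2 := by
    rw [e.toLinearEquiv.finrank_eq, (WithLp.linearEquiv 2 ℝ (E × ℂ)).finrank_eq,
      Module.finrank_prod, Complex.finrank_real_complex]
  have hpres : MeasurePreserving (fun x => WithLp.ofLp (e x)) :=
    (WithLp.volume_preserving_ofLp E ℂ).comp e.measurePreserving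
  ext A hA
  rw [Measure.map_apply hcont.measurable hA, Measure.toSphere_apply' _ (hcont.measurable hA),
    Ioo_smul_image_preimage_fst_eq_preimage_sphereCone,
    hpres.measure_preimage (measurableSet_sphereCone hA).nullMeasurableSet, volume_sphereCone hA,
    hrank, Measure.smul_apply, Measure.restrict_apply hA, smul_eq_mul, ← mul_assoc,
    ← ENNReal.ofReal_natCast, ← ENNReal.ofReal_mul (by positivity)]
  congr 2
  push_cast
  field_simp

end SphereProjection

section UnitQuaternions
open Real
open scoped Pointwise

/-- The Cayley–Dickson isometry `z + w j ↦ (z, w)` between `ℍ` and `ℂ²`, where `i : ℍ` is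
identified with `Complex.I`. -/
noncomputable def cayleyDickson : ℍ[ℝ] ≃ₗᵢ[ℝ] WithLp 2 (ℂ × ℂ) where
  toFun q := WithLp.toLp 2 (⟨q.re, q.imI⟩, ⟨q.imJ, q.imK⟩)
  invFun z := ⟨z.fst.re, z.fst.im, z.snd.re, z.snd.im⟩
  map_add' _ _ := rfl
  map_smul' _ _ := by
    refine WithLp.ofLp_injective 2 (Prod.ext (Complex.ext ?_ ?_) (Complex.ext ?_ ?_)) <;> simp
  left_inv _ := rfl
  right_inv _ := rfl
  norm_map' q := by
    change ‖WithLp.toLp 2 ((⟨q.re, q.imI⟩ : ℂ), (⟨q.imJ, q.imK⟩ : ℂ))‖ = ‖q‖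
    rw [← sq_eq_sq₀ (norm_nonneg _) (norm_nonneg _), WithLp.prod_norm_sq_eq_of_L2, sq ‖q‖,
      ← Quaternion.normSq_eq_norm_mul_self, Quaternion.normSq_def', Complex.sq_norm,
      Complex.sq_norm, WithLp.toLp_fst, WithLp.toLp_snd, Complex.normSq_mk, Complex.normSq_mk]
    ring

instance isProbabilityMeasure_muH : IsProbabilityMeasure muH := ⟨Measure.haarMeasure_self⟩

lemma measurePreserving_toSphere {V : Type*} [NormedAddCommGroup V] [InnerProductSpace ℝ V]
    [FiniteDimensional ℝ V] [MeasurableSpace V] [BorelSpace V] (L : V ≃ₗᵢ[ℝ] V)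
    {T : Metric.sphere (0 : V) 1 → Metric.sphere (0 : V) 1} (hT : ∀ y, (T y : V) = L y) :
    MeasurePreserving T (volume : Measure V).toSphere (volume : Measure V).toSphere := by
  have hmeas : Measurable T := (Topology.IsInducing.subtypeVal.continuous_iff.2
    ((L.continuous.comp continuous_subtype_val).congr fun y => (hT y).symm)).measurable
  refine ⟨hmeas, ?_⟩
  ext S hS
  have hcone : Set.Ioo (0 : ℝ) 1 • ((↑) '' (T ⁻¹' S) : Set V) =
      L ⁻¹' (Set.Ioo (0 : ℝ) 1 • ((↑) '' S : Set V)) := by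
    rw [Ioo_smul_image_coe_sphere, Ioo_smul_image_coe_sphere]
    ext x
    rw [Set.mem_preimage, Set.mem_ofPred_eq, Set.mem_ofPred_eq, L.norm_map, ← map_smul]
    refine and_congr_right fun hx => ?_
    have hunit : ‖x‖⁻¹ • x ∈ Metric.sphere (0 : V) 1 := by simp [norm_smul, hx.1.ne']
    lift ‖x‖⁻¹ • x to Metric.sphere (0 : V) 1 using hunit with y
    rw [← hT, Subtype.val_injective.mem_set_image, Subtype.val_injective.mem_set_image,
      Set.mem_preimage]
  rw [Measure.map_apply hmeas hS, Measure.toSphere_apply' _ (hmeas hS),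
    Measure.toSphere_apply' _ hS, hcone,
    L.measurePreserving.measure_preimage_emb L.toHomeomorph.measurableEmbedding]

instance isMulLeftInvariant_toSphere_quaternion :
    (volume : Measure ℍ[ℝ]).toSphere.IsMulLeftInvariant where
  map_mul_left_eq_self x := by
    have hx : ‖(x : ℍ[ℝ])‖ = 1 := mem_sphere_zero_iff_norm.1 x.2
    let L : ℍ[ℝ] ≃ₗᵢ[ℝ] ℍ[ℝ] := LinearIsometry.toLinearIsometryEquiv
      ⟨LinearMap.mulLeft ℝ (x : ℍ[ℝ]), fun q => by simp [hx]⟩ rfl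
    exact (measurePreserving_toSphere L fun _ => rfl).map_eq

lemma toSphere_quaternion_eq_smul_muH :
    (volume : Measure ℍ[ℝ]).toSphere = (volume : Measure ℍ[ℝ]).toSphere Set.univ • muH :=
  Measure.haarMeasure_unique _ ⊤

lemma measurable_fst_cayleyDickson :
    Measurable fun q : Metric.sphere (0 : ℍ[ℝ]) 1 => (cayleyDickson q).fst :=
  (continuous_fst.comp ((WithLp.prod_continuous_ofLp 2 ℂ ℂ).comp
    (cayleyDickson.continuous.comp continuous_subtype_val))).measurable

lemma volume_complex_ball_zero_one : volume (Metric.ball (0 : ℂ) 1) = ENNReal.ofReal π := by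
  rw [Complex.volume_ball, ENNReal.ofReal_one, one_pow, one_mul, ← NNReal.coe_real_pi,
    ENNReal.ofReal_coe_nnreal]

lemma map_fst_cayleyDickson_muH :
    muH.map (fun q : Metric.sphere (0 : ℍ[ℝ]) 1 => (cayleyDickson q).fst) =
      (ENNReal.ofReal π)⁻¹ • volume.restrict (Metric.ball (0 : ℂ) 1) := by
  have hpi : ENNReal.ofReal π ≠ 0 := by simp [pi_pos]
  have htwo : ENNReal.ofReal (2 * π) ≠ 0 := by simp [pi_pos]
  have hmap := map_fst_toSphere cayleyDickson
  rw [toSphere_quaternion_eq_smul_muH, Measure.map_smul] at hmap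
  set V := (volume : Measure ℍ[ℝ]).toSphere Set.univ
  set ν := muH.map (fun q : Metric.sphere (0 : ℍ[ℝ]) 1 => (cayleyDickson q).fst) with hν
  have hV : V = ENNReal.ofReal (2 * π) * ENNReal.ofReal π := by
    have h := congr($hmap Set.univ)
    rwa [hν, Measure.smul_apply, Measure.map_apply measurable_fst_cayleyDickson .univ,
      Set.preimage_univ, measure_univ, smul_eq_mul, mul_one, Measure.smul_apply,
      Measure.restrict_apply_univ, smul_eq_mul, volume_complex_ball_zero_one] at h
  ext A
  have h := congr($hmap A)
  simp only [hV, Measure.smul_apply, smul_eq_mul, mul_assoc] at h ⊢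
  rw [ENNReal.mul_right_inj htwo ENNReal.ofReal_ne_top] at h
  rw [← h, ENNReal.inv_mul_cancel_left hpi ENNReal.ofReal_ne_top]

end UnitQuaternions

section DiskIntegral
open Real intervalIntegral

lemma setIntegral_complex_ball_eq_integral_integral {F : Type*} [NormedAddCommGroup F]
    [NormedSpace ℝ F] {h : ℂ → F} (hh : IntegrableOn h (Metric.ball 0 1)) :
    ∫ z in Metric.ball 0 1, h z =
      ∫ a in (-1)..1, ∫ b in (-√(1 - a ^ 2))..√(1 - a ^ 2), h ⟨a, b⟩ := by
  set D := Metric.ball (0 : ℂ) 1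
  have hD : MeasurableSet D := Metric.isOpen_ball.measurableSet
  have hmem (a b : ℝ) : (⟨a, b⟩ : ℂ) ∈ D ↔ b ∈ Set.Ioo (-√(1 - a ^ 2)) √(1 - a ^ 2) := by
    rw [mem_ball_zero_iff, ← sq_lt_one_iff₀ (norm_nonneg _), Complex.sq_norm, Complex.normSq_mk,
      Set.mem_Ioo, ← Real.sq_lt, lt_sub_iff_add_lt', sq, sq]
  have hslice (a : ℝ) : ∫ b, D.indicator h ⟨a, b⟩ =
      ∫ b in (-√(1 - a ^ 2))..√(1 - a ^ 2), h ⟨a, b⟩ := by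
    rw [integral_of_le (neg_le_self (sqrt_nonneg _)), integral_Ioc_eq_integral_Ioo,
      ← MeasureTheory.integral_indicator measurableSet_Ioo]
    classical
    simp only [Set.indicator_apply, hmem]
  have hpres := Complex.volume_preserving_equiv_real_prod.symm
  have hint : Integrable fun p : ℝ × ℝ => D.indicator h ⟨p.1, p.2⟩ :=
    (hpres.integrable_comp_emb (MeasurableEquiv.measurableEmbedding _)).2
      ((integrable_indicator_iff hD).2 hh)
  calc ∫ z in D, h z
    _ = ∫ p : ℝ × ℝ, D.indicator h ⟨p.1, p.2⟩ := by
      rw [← MeasureTheory.integral_indicator hD,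
        ← hpres.integral_comp (MeasurableEquiv.measurableEmbedding _)]
      rfl
    _ = ∫ a, ∫ b in (-√(1 - a ^ 2))..√(1 - a ^ 2), h ⟨a, b⟩ := by
      simp_rw [← hslice]
      exact integral_prod _ hint
    _ = _ := by
      rw [integral_of_le (by norm_num), setIntegral_eq_integral_of_forall_compl_eq_zero]
      intro a ha
      have ha' : 1 - a ^ 2 ≤ 0 := by
        by_contra! hlt
        have := abs_lt.1 ((sq_lt_one_iff_abs_lt_one a).1 (by linarith))
        exact ha ⟨this.1, this.2.le⟩
      simp [sqrt_eq_zero_of_nonpos ha']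

lemma setIntegral_complex_ball_eq_integral_cos_mul {h : ℂ → ℝ}
    (hh : IntegrableOn h (Metric.ball 0 1)) :
    ∫ z in Metric.ball 0 1, h z =
      ∫ x in (-(π / 2))..(π / 2), cos x * ∫ b in (-cos x)..cos x, h ⟨sin x, b⟩ := by
  have hsubst := integral_comp_mul_deriv_of_deriv_nonneg (a := -(π / 2)) (b := π / 2)
    (f := sin) (f' := cos) (g := fun a => ∫ b in (-√(1 - a ^ 2))..√(1 - a ^ 2), h ⟨a, b⟩)
    continuous_sin.continuousOn (fun x _ => hasDerivAt_sin x)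
    (fun x hx => cos_nonneg_of_mem_Icc (by
      rw [min_eq_left (by linarith [pi_pos]), max_eq_right (by linarith [pi_pos])] at hx
      exact ⟨hx.1.le, hx.2.le⟩))
  rw [sin_neg, sin_pi_div_two, ← setIntegral_complex_ball_eq_integral_integral hh] at hsubst
  rw [← hsubst]
  refine integral_congr fun x hx => ?_
  rw [Set.uIcc_of_le (by linarith [pi_pos])] at hx
  have hcos : √(1 - sin x ^ 2) = cos x := by
    rw [← cos_sq', sqrt_sq (cos_nonneg_of_mem_Icc hx)]
  simp only [Function.comp_apply, hcos, mul_comm]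

lemma integrableOn_complex_ball_log_one_sub_im :
    IntegrableOn (fun z : ℂ => log (1 - z.im)) (Metric.ball 0 1) := by
  have hlog : IntegrableOn (fun b : ℝ => log (1 - b)) (Set.Ioc (-1) 1) := by
    rw [← intervalIntegrable_iff_integrableOn_Ioc_of_le (by norm_num)]
    have hmero : MeromorphicOn (fun x : ℝ => 1 - x) (Set.uIcc (-1) 1) := fun x _ =>
      (analyticAt_const.sub analyticAt_id).meromorphicAt
    exact hmero.intervalIntegrable_log
  have hbox : IntegrableOn (fun p : ℝ × ℝ => log (1 - p.2)) (Set.Ioc (-1) 1 ×ˢ Set.Ioc (-1) 1) := by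
    rw [IntegrableOn, Measure.volume_eq_prod, ← Measure.prod_restrict]
    exact hlog.comp_snd _
  have hpre : IntegrableOn (fun z : ℂ => log (1 - z.im))
      (Complex.measurableEquivRealProd ⁻¹' (Set.Ioc (-1) 1 ×ˢ Set.Ioc (-1) 1)) :=
    (Complex.volume_preserving_equiv_real_prod.integrableOn_comp_preimage
      (MeasurableEquiv.measurableEmbedding _)).2 hbox
  refine hpre.mono_set fun z hz => ?_
  rw [mem_ball_zero_iff] at hz
  have hre := abs_lt.1 ((Complex.abs_re_le_norm z).trans_lt hz)
  have him := abs_lt.1 ((Complex.abs_im_le_norm z).trans_lt hz)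
  exact ⟨⟨hre.1, hre.2.le⟩, him.1, him.2.le⟩

lemma integral_log_sub_mul_symm (c p : ℝ) {q : ℝ} (hq : q ≠ 0) :
    ∫ b in (-c)..c, log (p - q * b) =
      ((p + q * c) * log (p + q * c) - (p - q * c) * log (p - q * c)) / q - 2 * c := by
  rw [integral_comp_sub_mul (fun y => log y) hq, integral_log, smul_eq_mul]
  field_simp
  ring_nf

lemma intervalIntegrable_comp_neg_cos {G : ℝ → ℝ}
    (hG : ∀ a b, IntervalIntegrable (fun x => G (cos x)) volume a b) (a b : ℝ) :
    IntervalIntegrable (fun x => G (-cos x)) volume a b := by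
  simpa [cos_add_pi] using (hG (a + π) (b + π)).comp_add_right π

lemma integral_comp_cos_add_comp_neg_cos {G : ℝ → ℝ}
    (hG : ∀ a b, IntervalIntegrable (fun x => G (cos x)) volume a b) :
    ∫ x in (-(π / 2))..(π / 2), (G (cos x) + G (-cos x)) = 2 * ∫ x in 0..π, G (cos x) := by
  have hreflect : ∫ x in (-(π / 2))..(π / 2), G (-cos x) =
      ∫ x in (π / 2)..(-(π / 2) + 2 * π), G (cos x) := by
    have h := integral_comp_add_right (a := -(π / 2)) (b := π / 2) (fun x => G (cos x)) π
    simp only [cos_add_pi] at h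
    rw [h]
    congr 1 <;> ring
  have hper : Function.Periodic (fun x => G (cos x)) (2 * π) := fun x => by simp
  have heven : ∫ x in (-π)..0, G (cos x) = ∫ x in 0..π, G (cos x) := by
    simpa using (integral_comp_neg (a := 0) (b := π) (fun x => G (cos x))).symm
  calc ∫ x in (-(π / 2))..(π / 2), (G (cos x) + G (-cos x))
    _ = ∫ x in (-(π / 2))..(-(π / 2) + 2 * π), G (cos x) := by
      rw [integral_add (hG _ _) (intervalIntegrable_comp_neg_cos hG _ _), hreflect,
        integral_add_adjacent_intervals (hG _ _) (hG _ _)]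
    _ = ∫ x in (-π)..π, G (cos x) := by
      rw [hper.intervalIntegral_add_eq (-(π / 2)) (-π)]
      ring_nf
    _ = 2 * ∫ x in 0..π, G (cos x) := by
      rw [← integral_add_adjacent_intervals (hG (-π) 0) (hG 0 π), heven, two_mul]

end DiskIntegral

section StarPowers
open Real

/-- The `n`-th ∗-power of `x - i`, evaluated at `x = q` with coefficients on the right of the
powers of `q`. Since `x` commutes with coefficients under the ∗-product, multiplying by `x - i` on
the left turns the value `f q` into `q * f q - f q * i`. -/
noncomputable def starPowSubI : ℕ → ℍ[ℝ] → ℍ[ℝ]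
  | 0, _ => 1
  | n + 1, q => q * starPowSubI n q - starPowSubI n q * qI

mutual

/-- The even polynomial `Eₙ` in the decomposition `(1 + s) ^ n = Eₙ(s) + s * Oₙ(s)`. -/
def binomEven : ℕ → ℝ → ℝ
  | 0, _ => 1
  | n + 1, s => binomEven n s + s ^ 2 * binomOdd n s

/-- The even polynomial `Oₙ` in the decomposition `(1 + s) ^ n = Eₙ(s) + s * Oₙ(s)`. The
recursions for `Eₙ` and `Oₙ` are those of multiplication by `1 + s`. -/
def binomOdd : ℕ → ℝ → ℝ
  | 0, _ => 0
  | n + 1, s => binomEven n s + binomOdd n s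

end

lemma binomEven_add_mul_binomOdd (n : ℕ) (s : ℝ) :
    binomEven n s + s * binomOdd n s = (1 + s) ^ n := by
  induction n with
  | zero => simp [binomEven, binomOdd]
  | succ n ih => rw [binomEven, binomOdd, pow_succ (1 + s), ← ih]; ring

lemma binomEven_sub_mul_binomOdd (n : ℕ) (s : ℝ) :
    binomEven n s - s * binomOdd n s = (1 - s) ^ n := by
  induction n with
  | zero => simp [binomEven, binomOdd]
  | succ n ih => rw [binomEven, binomOdd, pow_succ (1 - s), ← ih]; ring

lemma binomEven_pos_and_binomOdd_nonneg (n : ℕ) (s : ℝ) : 0 < binomEven n s ∧ 0 ≤ binomOdd n s := by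
  induction n with
  | zero => simp [binomEven, binomOdd]
  | succ n ih =>
    obtain ⟨hE, hO⟩ := ih
    rw [binomEven, binomOdd]
    constructor <;> positivity

lemma binomOdd_nonneg (n : ℕ) (s : ℝ) : 0 ≤ binomOdd n s :=
  (binomEven_pos_and_binomOdd_nonneg n s).2

lemma binomOdd_pos {n : ℕ} (hn : n ≠ 0) (s : ℝ) : 0 < binomOdd n s := by
  obtain ⟨m, rfl⟩ := Nat.exists_eq_succ_of_ne_zero hn
  rw [binomOdd]
  exact add_pos_of_pos_of_nonneg (binomEven_pos_and_binomOdd_nonneg m s).1 (binomOdd_nonneg m s)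

lemma binomEven_neg_and_binomOdd_neg (n : ℕ) (s : ℝ) :
    binomEven n (-s) = binomEven n s ∧ binomOdd n (-s) = binomOdd n s := by
  induction n with
  | zero => simp [binomEven, binomOdd]
  | succ n ih => simp [binomEven, binomOdd, ih]

lemma continuous_binomEven_and_binomOdd (n : ℕ) :
    Continuous (binomEven n) ∧ Continuous (binomOdd n) := by
  induction n with
  | zero => exact ⟨continuous_const, continuous_const⟩
  | succ n ih =>
    obtain ⟨hE, hO⟩ := ih
    constructor
    · exact hE.add ((continuous_pow 2).mul hO)
    · exact hE.add hO

@[simp] lemma re_qI : qI.re = 0 := rfl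
@[simp] lemma imI_qI : qI.imI = 1 := rfl
@[simp] lemma imJ_qI : qI.imJ = 0 := rfl
@[simp] lemma imK_qI : qI.imK = 0 := rfl

lemma star_qI : star qI = -qI := by
  ext <;> simp

lemma quaternion_norm_sq_eq (q : ℍ[ℝ]) :
    ‖q‖ ^ 2 = q.re ^ 2 + q.imI ^ 2 + q.imJ ^ 2 + q.imK ^ 2 := by
  rw [sq, ← Quaternion.normSq_eq_norm_mul_self, Quaternion.normSq_def']

lemma norm_qI : ‖qI‖ = 1 := by
  rw [← sq_eq_sq₀ (norm_nonneg _) zero_le_one, quaternion_norm_sq_eq]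
  simp

lemma norm_sq_mul_sub_mul_qI {q : ℍ[ℝ]} (hq : ‖q‖ = 1) (f : ℍ[ℝ]) :
    ‖q * f - f * qI‖ ^ 2 = 2 * ‖f‖ ^ 2 + 2 * (q * (f * qI * star f)).re := by
  have hinner : q * f * star (f * qI) = -(q * (f * qI * star f)) := by
    rw [star_mul, star_qI]
    noncomm_ring
  rw [norm_sub_sq_real, Quaternion.inner_def, hinner, norm_mul, norm_mul, norm_qI, hq,
    Quaternion.re_neg]
  ring

lemma re_mul_mul_qI_mul_star (q f : ℍ[ℝ]) :
    (q * (f * qI * star f)).re = -(q.imI * (f.re ^ 2 + f.imI ^ 2 - f.imJ ^ 2 - f.imK ^ 2) +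
      q.imJ * (2 * (f.imI * f.imJ + f.re * f.imK)) +
      q.imK * (2 * (f.imI * f.imK - f.re * f.imJ))) := by
  simp only [re_mul, imI_mul, imJ_mul, imK_mul, re_qI, imI_qI, imJ_qI, imK_qI, re_star, imI_star,
    imJ_star, imK_star]
  ring

lemma re_mul_mul_sub_mul_qI {q : ℍ[ℝ]} (hq : ‖q‖ = 1) (f : ℍ[ℝ]) :
    (q * ((q * f - f * qI) * qI * star (q * f - f * qI))).re =
      2 * (q * (f * qI * star f)).re + 2 * (1 - q.re ^ 2) * ‖f‖ ^ 2 := by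
  have hq' := quaternion_norm_sq_eq q
  rw [hq] at hq'
  rw [re_mul_mul_qI_mul_star, re_mul_mul_qI_mul_star, quaternion_norm_sq_eq]
  simp only [re_sub, re_mul, re_qI, imI_sub, imI_mul, imI_qI, imJ_sub, imJ_mul, imJ_qI, imK_sub,
    imK_mul, imK_qI]
  linear_combination (q.imI * (f.re ^ 2 + f.imI ^ 2 - f.imJ ^ 2 - f.imK ^ 2) +
    q.imJ * (2 * (f.imI * f.imJ + f.re * f.imK)) + q.imK * (2 * (f.imI * f.imK - f.re * f.imJ)) -
    2 * (f.re ^ 2 + f.imI ^ 2 + f.imJ ^ 2 + f.imK ^ 2)) * hq'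

lemma norm_sq_starPowSubI_and_re {q : ℍ[ℝ]} (hq : ‖q‖ = 1) {s : ℝ} (hs : s ^ 2 = 1 - q.re ^ 2)
    (n : ℕ) :
    ‖starPowSubI n q‖ ^ 2 = 2 ^ n * (binomEven n s - binomOdd n s * q.imI) ∧
      (q * (starPowSubI n q * qI * star (starPowSubI n q))).re =
        2 ^ n * (s ^ 2 * binomOdd n s - binomEven n s * q.imI) := by
  induction n with
  | zero => simp [starPowSubI, binomEven, binomOdd]
  | succ n ih =>
    rw [starPowSubI, norm_sq_mul_sub_mul_qI hq, re_mul_mul_sub_mul_qI hq, ih.1, ih.2, ← hs,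
      binomEven, binomOdd]
    constructor <;> ring

/-- The value of `‖f q‖ ^ 2 / 2 ^ n` for the `n`-th ∗-power `f` of `x - i` at a unit quaternion `q`
with first Cayley–Dickson component `z`. -/
noncomputable def starPowFactor (n : ℕ) (z : ℂ) : ℝ :=
  binomEven n √(1 - z.re ^ 2) - binomOdd n √(1 - z.re ^ 2) * z.im

lemma measurable_starPowFactor (n : ℕ) : Measurable (starPowFactor n) := by
  have hE := (continuous_binomEven_and_binomOdd n).1
  have hO := (continuous_binomEven_and_binomOdd n).2
  unfold starPowFactor
  fun_prop

lemma norm_sq_starPowSubI {q : ℍ[ℝ]} (hq : ‖q‖ = 1) (n : ℕ) :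
    ‖starPowSubI n q‖ ^ 2 = 2 ^ n * starPowFactor n (cayleyDickson q).fst := by
  have hre : 0 ≤ 1 - q.re ^ 2 := by
    have h := quaternion_norm_sq_eq q
    rw [hq] at h
    nlinarith
  exact (norm_sq_starPowSubI_and_re hq (sq_sqrt hre) n).1

lemma im_sq_lt_of_mem_ball {z : ℂ} (hz : z ∈ Metric.ball (0 : ℂ) 1) : z.im ^ 2 < 1 - z.re ^ 2 := by
  rw [mem_ball_zero_iff, ← sq_lt_one_iff₀ (norm_nonneg _), Complex.sq_norm,
    Complex.normSq_apply] at hz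
  linarith

lemma one_sub_im_pow_le_starPowFactor {z : ℂ} (hz : z ∈ Metric.ball (0 : ℂ) 1) (n : ℕ) :
    (1 - z.im) ^ n ≤ starPowFactor n z := by
  have him := im_sq_lt_of_mem_ball hz
  have hs : √(1 - z.re ^ 2) ^ 2 = 1 - z.re ^ 2 := sq_sqrt (by nlinarith)
  unfold starPowFactor
  set s := √(1 - z.re ^ 2)
  have hone : 0 ≤ 1 - z.im := by nlinarith
  induction n with
  | zero => simp [binomEven, binomOdd]
  | succ n ih =>
    calc (1 - z.im) ^ (n + 1)
      _ ≤ (1 - z.im) * (binomEven n s - binomOdd n s * z.im) := by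
        rw [pow_succ']
        exact mul_le_mul_of_nonneg_left ih hone
      _ ≤ (1 - z.im) * (binomEven n s - binomOdd n s * z.im) +
          (s ^ 2 - z.im ^ 2) * binomOdd n s :=
        le_add_of_nonneg_right (mul_nonneg (by linarith) (binomOdd_nonneg n s))
      _ = binomEven (n + 1) s - binomOdd (n + 1) s * z.im := by
        rw [binomEven, binomOdd]
        ring

lemma starPowFactor_pos {z : ℂ} (hz : z ∈ Metric.ball (0 : ℂ) 1) (n : ℕ) :
    0 < starPowFactor n z := by
  have him : 0 < 1 - z.im := by nlinarith [im_sq_lt_of_mem_ball hz]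
  exact (pow_pos him n).trans_le (one_sub_im_pow_le_starPowFactor hz n)

lemma starPowFactor_le_two_pow {z : ℂ} (hz : z ∈ Metric.ball (0 : ℂ) 1) (n : ℕ) :
    starPowFactor n z ≤ 2 ^ n := by
  set s := √(1 - z.re ^ 2) with hs
  have him : -s ≤ z.im := (abs_le.1 (abs_le_sqrt (im_sq_lt_of_mem_ball hz).le)).1
  have hs1 : s ≤ 1 := sqrt_le_one.2 (by nlinarith)
  calc starPowFactor n z
    _ ≤ binomEven n s + s * binomOdd n s := by
      rw [starPowFactor, ← hs]
      nlinarith [binomOdd_nonneg n s]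
    _ = (1 + s) ^ n := binomEven_add_mul_binomOdd n s
    _ ≤ 2 ^ n := pow_le_pow_left₀ (by positivity) (by linarith) n

lemma integrableOn_log_starPowFactor (n : ℕ) :
    IntegrableOn (fun z => log (starPowFactor n z)) (Metric.ball 0 1) := by
  have hdom : IntegrableOn (fun z : ℂ => n * log 2 + n * |log (1 - z.im)|) (Metric.ball 0 1) :=
    (integrableOn_const (by simp)).add (integrableOn_complex_ball_log_one_sub_im.abs.const_mul _)
  refine hdom.mono' (measurable_starPowFactor n).log.aestronglyMeasurable ?_
  filter_upwards [ae_restrict_mem Metric.isOpen_ball.measurableSet] with z hz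
  have him : 0 < 1 - z.im := by nlinarith [im_sq_lt_of_mem_ball hz]
  have hlow := log_le_log (pow_pos him n) (one_sub_im_pow_le_starPowFactor hz n)
  have hup := log_le_log (starPowFactor_pos hz n) (starPowFactor_le_two_pow hz n)
  rw [log_pow] at hlow hup
  have hn : (0 : ℝ) ≤ n := n.cast_nonneg
  have habs := mul_le_mul_of_nonneg_left (neg_abs_le (log (1 - z.im))) hn
  have hnonneg := mul_nonneg hn (abs_nonneg (log (1 - z.im)))
  have hlog2 := mul_nonneg hn (log_nonneg one_le_two)
  rw [norm_eq_abs, abs_le]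
  constructor <;> linarith

lemma mahlerH_starPowSubI_eq_setIntegral (n : ℕ) :
    mahlerH (starPowSubI n) =
      n / 2 * log 2 + (2 * π)⁻¹ * ∫ z in Metric.ball 0 1, log (starPowFactor n z) := by
  have hball : MeasurableSet (Metric.ball (0 : ℂ) 1) := Metric.isOpen_ball.measurableSet
  have hlog (q : Metric.sphere (0 : ℍ[ℝ]) 1) : log ‖starPowSubI n q‖ =
      2⁻¹ * log (2 ^ n * starPowFactor n (cayleyDickson q).fst) := by
    rw [← norm_sq_starPowSubI (mem_sphere_zero_iff_norm.1 q.2), log_pow]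
    push_cast
    ring
  have hsplit (z : ℂ) (hz : z ∈ Metric.ball 0 1) :
      2⁻¹ * log (2 ^ n * starPowFactor n z) = n / 2 * log 2 + 2⁻¹ * log (starPowFactor n z) := by
    rw [log_mul (by positivity) (starPowFactor_pos hz n).ne', log_pow]
    ring
  have hmeas : Measurable fun z => 2⁻¹ * log (2 ^ n * starPowFactor n z) :=
    ((measurable_starPowFactor n).const_mul _).log.const_mul _
  have hconst : IntegrableOn (fun _ : ℂ => n / 2 * log 2) (Metric.ball 0 1) :=
    integrableOn_const (by simp)
  calc mahlerH (starPowSubI n)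
    _ = ∫ z, 2⁻¹ * log (2 ^ n * starPowFactor n z)
        ∂(muH.map fun q : Metric.sphere (0 : ℍ[ℝ]) 1 => (cayleyDickson q).fst) := by
      simp_rw [mahlerH, hlog]
      rw [integral_map measurable_fst_cayleyDickson.aemeasurable hmeas.aestronglyMeasurable]
    _ = π⁻¹ * ∫ z in Metric.ball 0 1, (n / 2 * log 2 + 2⁻¹ * log (starPowFactor n z)) := by
      rw [map_fst_cayleyDickson_muH, integral_smul_measure, ENNReal.toReal_inv,
        ENNReal.toReal_ofReal pi_pos.le, smul_eq_mul, setIntegral_congr_fun hball hsplit]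
    _ = _ := by
      rw [MeasureTheory.integral_add hconst
        ((integrableOn_log_starPowFactor n).const_mul _), setIntegral_const,
        MeasureTheory.integral_const_mul, measureReal_def,
        volume_complex_ball_zero_one, ENNReal.toReal_ofReal pi_pos.le, smul_eq_mul]
      field_simp

lemma cos_mul_integral_log_starPowFactor {n : ℕ} (hn : n ≠ 0) {x : ℝ} (hx : 0 ≤ cos x) :
    cos x * ∫ b in (-cos x)..cos x, log (starPowFactor n ⟨sin x, b⟩) =
      n * (cos x * (1 + cos x) ^ n / binomOdd n (cos x) * log (1 + cos x) +
        -cos x * (1 + -cos x) ^ n / binomOdd n (-cos x) * log (1 + -cos x)) - 2 * cos x ^ 2 := by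
  have hfactor (b : ℝ) : starPowFactor n ⟨sin x, b⟩ =
      binomEven n (cos x) - binomOdd n (cos x) * b := by
    rw [starPowFactor, ← cos_sq', sqrt_sq hx]
  simp_rw [hfactor]
  rw [integral_log_sub_mul_symm _ _ (binomOdd_pos hn _).ne', mul_comm (binomOdd n (cos x)) (cos x),
    binomEven_add_mul_binomOdd, binomEven_sub_mul_binomOdd, log_pow, log_pow,
    (binomEven_neg_and_binomOdd_neg n _).2]
  ring_nf

lemma intervalIntegrable_starPow_integrand {n : ℕ} (hn : n ≠ 0) (a b : ℝ) :
    IntervalIntegrable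
      (fun x => cos x * (1 + cos x) ^ n / binomOdd n (cos x) * log (1 + cos x)) volume a b := by
  refine intervalIntegrable_mul_log_one_add_cos (.div₀ (by fun_prop) ?_ ?_) a b
  · exact (continuous_binomEven_and_binomOdd n).2.comp continuous_cos
  · exact fun x => (binomOdd_pos hn _).ne'

lemma setIntegral_log_starPowFactor {n : ℕ} (hn : n ≠ 0) :
    ∫ z in Metric.ball 0 1, log (starPowFactor n z) =
      2 * n * (∫ x in 0..π, cos x * (1 + cos x) ^ n / binomOdd n (cos x) * log (1 + cos x)) -
        π := by
  set G : ℝ → ℝ := fun c => c * (1 + c) ^ n / binomOdd n c * log (1 + c)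
  have hG (a b : ℝ) : IntervalIntegrable (fun x => G (cos x)) volume a b :=
    intervalIntegrable_starPow_integrand hn a b
  calc ∫ z in Metric.ball 0 1, log (starPowFactor n z)
    _ = ∫ x in (-(π / 2))..(π / 2), (n * (G (cos x) + G (-cos x)) - 2 * cos x ^ 2) := by
      rw [setIntegral_complex_ball_eq_integral_cos_mul (integrableOn_log_starPowFactor n)]
      refine intervalIntegral.integral_congr fun x hx => ?_
      rw [Set.uIcc_of_le (by linarith [pi_pos])] at hx
      exact cos_mul_integral_log_starPowFactor hn (cos_nonneg_of_mem_Icc hx)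
    _ = n * (∫ x in (-(π / 2))..(π / 2), (G (cos x) + G (-cos x))) -
        2 * ∫ x in (-(π / 2))..(π / 2), cos x ^ 2 := by
      rw [intervalIntegral.integral_sub
        (((hG _ _).add (intervalIntegrable_comp_neg_cos hG _ _)).const_mul _)
        (Continuous.intervalIntegrable (by fun_prop) _ _), intervalIntegral.integral_const_mul,
        intervalIntegral.integral_const_mul]
    _ = _ := by
      rw [integral_comp_cos_add_comp_neg_cos hG, integral_cos_sq, cos_neg, sin_neg, cos_pi_div_two,
        sin_pi_div_two]
      ring

theorem mahlerH_starPowSubI {n : ℕ} (hn : n ≠ 0) :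
    mahlerH (starPowSubI n) = n / 2 * log 2 - 1 / 2 + n / π *
      ∫ x in 0..π, cos x * (1 + cos x) ^ n / binomOdd n (cos x) * log (1 + cos x) := by
  rw [mahlerH_starPowSubI_eq_setIntegral, setIntegral_log_starPowFactor hn]
  have := pi_pos.ne'
  generalize (∫ x in 0..π, _ : ℝ) = I
  field_simp
  ring

lemma starPowSubI_two : starPowSubI 2 = fun q => q ^ 2 - 2 * q * qI - 1 := by
  funext q
  have hI : qI * qI = -1 := by ext <;> simp
  simp only [starPowSubI, mul_one, one_mul, mul_sub, sub_mul, mul_assoc, hI]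
  noncomm_ring

lemma starPowSubI_three : starPowSubI 3 = fun q => q ^ 3 - 3 * q ^ 2 * qI - 3 * q + qI := by
  funext q
  have hI : qI * qI = -1 := by ext <;> simp
  simp only [starPowSubI, mul_one, one_mul, mul_sub, sub_mul, mul_assoc, hI]
  noncomm_ring

lemma mahlerH_starPowSubI_two : mahlerH (starPowSubI 2) = 5 / 6 := by
  have h (f : ℝ → ℝ) (hf : Continuous f) := intervalIntegrable_mul_log_one_add_cos hf 0 π
  have h1 := h cos (by fun_prop)
  have h2 := (h (fun x => cos x ^ 2) (by fun_prop)).const_mul 2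
  have h3 := h (fun x => cos x ^ 3) (by fun_prop)
  have hint : ∫ x in 0..π, cos x * (1 + cos x) ^ 2 / binomOdd 2 (cos x) * log (1 + cos x) =
      2 / 3 * π - π / 2 * log 2 := by
    calc
      _ = ∫ x in 0..π, 2⁻¹ * (cos x * log (1 + cos x) + 2 * (cos x ^ 2 * log (1 + cos x)) +
          cos x ^ 3 * log (1 + cos x)) := by
        congr 1
        funext x
        simp only [binomOdd, binomEven]
        ring
      _ = _ := by
        rw [intervalIntegral.integral_const_mul, intervalIntegral.integral_add (h1.add h2) h3,
          intervalIntegral.integral_add h1 h2, intervalIntegral.integral_const_mul,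
          integral_cos_mul_log_one_add_cos, integral_cos_sq_mul_log_one_add_cos,
          integral_cos_cube_mul_log_one_add_cos]
        ring
  rw [mahlerH_starPowSubI two_ne_zero, hint]
  have := pi_pos.ne'
  field_simp
  push_cast
  ring

lemma mahlerH_starPowSubI_three : mahlerH (starPowSubI 3) = 31 / 4 - 2 * π := by
  have h (f : ℝ → ℝ) (hf : Continuous f) := intervalIntegrable_mul_log_one_add_cos hf 0 π
  have h1 := (h cos (by fun_prop)).const_mul 3
  have h2 := h (fun x => cos x ^ 2) (by fun_prop)
  have h3 := (h (fun x => cos x / (cos x ^ 2 + 3))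
    (continuous_cos.div (by fun_prop) fun x => by positivity)).const_mul 8
  have hdiv (c : ℝ) : c * (1 + c) ^ 3 / binomOdd 3 c = c ^ 2 + 3 * c - 8 * (c / (c ^ 2 + 3)) := by
    have hc : c ^ 2 + 3 ≠ 0 := by positivity
    rw [show binomOdd 3 c = c ^ 2 + 3 by simp only [binomOdd, binomEven]; ring]
    field_simp
    ring
  have hint : ∫ x in 0..π, cos x * (1 + cos x) ^ 3 / binomOdd 3 (cos x) * log (1 + cos x) =
      11 / 4 * π - π / 2 * log 2 - 2 / 3 * π ^ 2 := by
    calc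
      _ = ∫ x in 0..π, (cos x ^ 2 * log (1 + cos x) + 3 * (cos x * log (1 + cos x)) -
          8 * (cos x / (cos x ^ 2 + 3) * log (1 + cos x))) := by
        congr 1
        funext x
        rw [hdiv]
        ring
      _ = _ := by
        rw [intervalIntegral.integral_sub (h2.add h1) h3, intervalIntegral.integral_add h2 h1,
          intervalIntegral.integral_const_mul, intervalIntegral.integral_const_mul,
          integral_cos_mul_log_one_add_cos, integral_cos_sq_mul_log_one_add_cos,
          integral_cos_div_cos_sq_add_three_mul_log_one_add_cos]
        ring
  rw [mahlerH_starPowSubI three_ne_zero, hint]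
  have := pi_pos.ne'
  field_simp
  push_cast
  ring

end StarPowers

/-- the Mahler measures of the ∗-square and ∗-cube of `x - i`. -/
theorem mahlerH_star_square_cube_sub_i :
    mahlerH (fun q => q ^ 2 - 2 * q * qI - 1) = 5 / 6 ∧
    mahlerH (fun q => q ^ 3 - 3 * q ^ 2 * qI - 3 * q + qI) = 31 / 4 - 2 * Real.pi := by
  rw [← starPowSubI_two, ← starPowSubI_three]
  exact ⟨mahlerH_starPowSubI_two, mahlerH_starPowSubI_three⟩
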